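/- For every n ≥ 1 and every x ∈ H_n(ℍ_ℂ), the characteristic polynomial of the complex matrix x̂ ∈ M_{2n}(ℂ) equals q², where q is the monic degree-n complex polynomial q(λ) = dt_n(λ·𝟏 − x); consequently every eigenvalue of x̂ has even algebraic multiplicity, and dt_n(x) equals the product of the eigenvalues of x̂, each counted with half its algebraic multiplicity. -/

import Mathlib

/-!
The recursion for `dt` and the block formula for determinants give `dt(x)² = det x̂` when
`x₁₁ ≠ 0`, hence everywhere by density. So `z ↦ dt(z𝟏 - x)` is a continuous square root of the
characteristic polynomial of `x̂`. A continuous `k`-th root of a nonzero polynomial is entire, the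
zeros of the polynomial being removable singularities, and grows at most like a power of `z`, so by
Liouville's theorem it is a polynomial `q`. Up to sign `q` is monic. To fix the sign, note that both
sides of `dt(cx) = cⁿ dt(x)` have the same square, so that they agree on the connected set of
all `c ≠ 0`, as they do at `c = 1`. Therefore `dt(𝟏 - t x)` is the reversed polynomial of `q`, whose
value `dt(𝟏) = 1` at `t = 0` is the leading coefficient of `q`.
-/

noncomputable section

open Matrix

/-- The biquaternions `ℍ_ℂ`: quaternions with complex coefficients. -/
abbrev HC : Type := Quaternion ℂ

/-- The embedding `ℂ ⊆ ℍ_ℂ` as scalar biquaternions. -/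
def cq (z : ℂ) : HC := ⟨z, 0, 0, 0⟩

/-- The `ℂ`-linear involution `x ↦ x⋄` (quaternion conjugation). -/
def qdia (x : HC) : HC := ⟨x.re, -x.imI, -x.imJ, -x.imK⟩

/-- Coefficientwise complex conjugation `x ↦ x̄`. -/
def qbar (x : HC) : HC :=
  ⟨starRingEnd ℂ x.re, starRingEnd ℂ x.imI, starRingEnd ℂ x.imJ, starRingEnd ℂ x.imK⟩

/-- The conjugate-linear involution `x* = (x̄)⋄`. -/
def qstar (x : HC) : HC := qdia (qbar x)

/-- The natural (Euclidean/product) topology on the biquaternions `ℍ_ℂ ≅ ℂ⁴`. -/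
instance : TopologicalSpace HC :=
  TopologicalSpace.induced (fun q : HC => (q.re, q.imI, q.imJ, q.imK)) inferInstance

/-- The 2×2 complex matrix `x̂` associated to a biquaternion `x`. -/
def hat (x : HC) : Matrix (Fin 2) (Fin 2) ℂ :=
  !![x.re + Complex.I * x.imI, x.imJ + Complex.I * x.imK;
     -x.imJ + Complex.I * x.imK, x.re - Complex.I * x.imI]

/-- The `2n × 2n` complex matrix `Â` obtained by replacing every biquaternion entry `a`
of `A` by the 2×2 block `â`. -/
def hatM {n : ℕ} (A : Matrix (Fin n) (Fin n) HC) :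
    Matrix (Fin n × Fin 2) (Fin n × Fin 2) ℂ :=
  Matrix.of fun p q => hat (A p.1 q.1) p.2 q.2

/-- `A` is `⋄`-hermitian: `Aᵈ = A`, i.e. `(A j i)⋄ = A i j` for all `i j`.
`H_n(ℍ_ℂ)` is the collection of all such matrices. -/
def IsHerm {n : ℕ} (A : Matrix (Fin n) (Fin n) HC) : Prop :=
  ∀ i j, qdia (A j i) = A i j

/-- The defining properties of the sequence of determinants `(dt_n)_{n ≥ 1}`:
`D n` plays the role of `dt_{n+1} : H_{n+1}(ℍ_ℂ) → ℍ_ℂ`.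
(i) continuity on `H_{n+1}(ℍ_ℂ)`; (ii) `dt₁((x₁₁)) = x₁₁`;
(iii) the inductive formula for `dt_{n+1}` when `x₁₁ ≠ 0`. -/
def IsDtSeq (D : ∀ n : ℕ, Matrix (Fin (n + 1)) (Fin (n + 1)) HC → HC) : Prop :=
  (∀ n : ℕ, ContinuousOn (D n) {A | IsHerm A}) ∧
  (∀ A : Matrix (Fin 1) (Fin 1) HC, IsHerm A → D 0 A = A 0 0) ∧
  (∀ (n : ℕ) (A : Matrix (Fin (n + 2)) (Fin (n + 2)) HC), IsHerm A → A 0 0 ≠ 0 →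
    D (n + 1) A = A 0 0 *
      D n (Matrix.of fun i j : Fin (n + 1) =>
        A i.succ j.succ - Ring.inverse (A 0 0) * A i.succ 0 * A 0 j.succ))

open Polynomial Filter Asymptotics Bornology Topology Quaternion

theorem differentiableAt_of_differentiableAt_comp {𝕜 : Type*} [NontriviallyNormedField 𝕜]
    [CompleteSpace 𝕜] {E : Type*} [NormedAddCommGroup E] [NormedSpace 𝕜 E] {f : E → 𝕜}
    {g : 𝕜 → 𝕜} {a : E} {g' : 𝕜} (hf : ContinuousAt f a)
    (hg : HasStrictDerivAt g g' (f a)) (hg' : g' ≠ 0) (hgf : DifferentiableAt 𝕜 (g ∘ f) a) :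
    DifferentiableAt 𝕜 f a :=
  ((hg.to_localInverse hg').hasDerivAt.differentiableAt.comp a hgf).congr_of_eventuallyEq <|
    (hf.eventually (hg.eventually_left_inverse hg')).mono fun _ h => h.symm

theorem exists_polynomial_eval_eq_of_isLittleO {f : ℂ → ℂ} (hf : Differentiable ℂ f) {n : ℕ}
    (hfn : f =o[cobounded ℂ] (· ^ n)) : ∃ q : ℂ[X], ∀ z, q.eval z = f z := by
  induction n generalizing f with
  | zero =>
    have hlim : Tendsto f (cocompact ℂ) (𝓝 0) := by
      simpa only [pow_zero, isLittleO_one_iff, Metric.cobounded_eq_cocompact] using hfn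
    exact ⟨0, fun z => by rw [eval_zero, hf.apply_eq_of_tendsto_cocompact z hlim]⟩
  | succ n ih =>
    have hdslope : Differentiable ℂ (dslope f 0) := by
      rw [← differentiableOn_univ] at hf ⊢
      exact (Complex.differentiableOn_dslope univ_mem).2 hf
    have hconst : (fun _ => f 0) =o[cobounded ℂ] fun z : ℂ => z ^ (n + 1) := by
      simpa using (isLittleO_pow_pow_cobounded_of_lt (R := ℂ) n.succ_pos).const_mul_left (f 0)
    have hgrowth : dslope f 0 =o[cobounded ℂ] (· ^ n) := by
      refine ((isBigO_refl (fun z : ℂ => z⁻¹) _).mul_isLittleO (hfn.sub hconst)).congr' ?_ ?_ <;>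
        filter_upwards [eventually_ne_cobounded 0] with z hz
      · rw [dslope_of_ne f hz, slope_def_field, sub_zero, div_eq_inv_mul]
      · rw [pow_succ', inv_mul_cancel_left₀ hz]
    obtain ⟨q, hq⟩ := ih hdslope hgrowth
    refine ⟨C (f 0) + X * q, fun z => ?_⟩
    have hz : z * dslope f 0 z = f z - f 0 := by
      simpa only [sub_zero, smul_eq_mul] using sub_smul_dslope f 0 z
    simp [hq, hz]

theorem differentiable_of_pow_eq_eval {f : ℂ → ℂ} (hf : Continuous f) {p : ℂ[X]} (hp : p ≠ 0)
    {k : ℕ} (hk : k ≠ 0) (hfp : ∀ z, f z ^ k = p.eval z) : Differentiable ℂ f := by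
  have off_roots : ∀ z, ¬ p.IsRoot z → DifferentiableAt ℂ f z := fun z hz => by
    have hfz : f z ≠ 0 := fun h => hz <| by rw [IsRoot, ← hfp, h, zero_pow hk]
    refine differentiableAt_of_differentiableAt_comp hf.continuousAt (hasStrictDerivAt_pow k (f z))
      (mul_ne_zero (Nat.cast_ne_zero.2 hk) (pow_ne_zero _ hfz)) ?_
    exact p.differentiableAt.congr_of_eventuallyEq (.of_forall hfp)
  intro z
  refine (Complex.analyticAt_of_differentiable_on_punctured_nhds_of_continuousAt ?_
    hf.continuousAt).differentiableAt
  exact ((eventually_cofinite_not_isRoot hp).filter_mono (nhdsNE_le_cofinite z)).mono off_roots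

theorem isBigO_of_pow_eq_eval {R : Type*} [NormedField R] {f : R → R} {p : R[X]} {k : ℕ}
    (hk : k ≠ 0) (hfp : ∀ z, f z ^ k = p.eval z) : f =O[cobounded R] (· ^ p.natDegree) := by
  refine IsBigO.of_pow hk ?_
  calc f ^ k = p.eval := funext hfp
    _ =O[cobounded R] (X ^ (p.natDegree * k) : R[X]).eval := by
      refine isBigO_cobounded_of_degree_le ?_
      rw [degree_X_pow]
      exact degree_le_of_natDegree_le (Nat.le_mul_of_pos_right _ (Nat.pos_of_ne_zero hk))
    _ = (· ^ p.natDegree) ^ k := by ext z; simp [pow_mul]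

theorem exists_polynomial_eval_eq_of_pow_eq_eval {f : ℂ → ℂ} (hf : Continuous f) {p : ℂ[X]}
    (hp : p ≠ 0) {k : ℕ} (hk : k ≠ 0) (hfp : ∀ z, f z ^ k = p.eval z) :
    ∃ q : ℂ[X], ∀ z, q.eval z = f z :=
  exists_polynomial_eval_eq_of_isLittleO (differentiable_of_pow_eq_eval hf hp hk hfp)
    ((isBigO_of_pow_eq_eval hk hfp).trans_isLittleO
      (isLittleO_pow_pow_cobounded_of_lt p.natDegree.lt_succ_self))

/-- The linear identification of `ℍ_ℂ` with `ℂ⁴` that induces the topology of `HC`. -/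
def HC.coords : HC →ₗ[ℂ] ℂ × ℂ × ℂ × ℂ where
  toFun q := (q.re, q.imI, q.imJ, q.imK)
  map_add' _ _ := rfl
  map_smul' _ _ := rfl

theorem HC.coords_injective : Function.Injective HC.coords := fun x y h =>
  Quaternion.ext x y (congrArg (·.1) h) (congrArg (·.2.1) h) (congrArg (·.2.2.1) h)
    (congrArg (·.2.2.2) h)

instance : T2Space HC := .of_injective_continuous HC.coords_injective continuous_induced_dom

instance : IsTopologicalAddGroup HC := topologicalAddGroup_induced HC.coords

instance : ContinuousSMul ℂ HC := continuousSMul_induced HC.coords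

theorem HC.continuous_re : Continuous fun x : HC => x.re :=
  Continuous.fst (continuous_induced_dom (f := HC.coords))

theorem cq_eq_coe (z : ℂ) : cq z = (z : ℍ[ℂ]) := rfl

theorem cq_eq_smul_one (z : ℂ) : cq z = z • (1 : HC) := by
  rw [cq_eq_coe, ← Quaternion.coe_mul_eq_smul, mul_one]

theorem inverse_cq {z : ℂ} (hz : z ≠ 0) : Ring.inverse (cq z) = cq z⁻¹ :=
  Ring.inverse_unit ⟨cq z, cq z⁻¹,
    by simp only [cq_eq_coe, ← Quaternion.coe_mul, mul_inv_cancel₀ hz, Quaternion.coe_one],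
    by simp only [cq_eq_coe, ← Quaternion.coe_mul, inv_mul_cancel₀ hz, Quaternion.coe_one]⟩

theorem continuous_cq : Continuous cq := by
  simp only [funext cq_eq_smul_one]
  fun_prop

-- `rw [zero_smul]` fails on these matrices: the instance paths on `HC` agree only by unfolding.
theorem zero_smul_matrix {m n : Type*} (A : Matrix m n HC) : (0 : ℂ) • A = 0 :=
  zero_smul ℂ A

theorem qdia_eq_star (x : HC) : qdia x = star x := by
  ext <;> simp [qdia]

theorem qdia_sub (x y : HC) : qdia (x - y) = qdia x - qdia y := by
  simp only [qdia_eq_star]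
  exact star_sub x y

theorem qdia_smul (c : ℂ) (x : HC) : qdia (c • x) = c • qdia x := by
  simp only [qdia_eq_star, Quaternion.star_smul]

theorem qdia_mul (x y : HC) : qdia (x * y) = qdia y * qdia x := by
  simp only [qdia_eq_star, star_mul]

theorem isHerm_iff_isHermitian {n : ℕ} {A : Matrix (Fin n) (Fin n) HC} :
    IsHerm A ↔ A.IsHermitian := by
  simp only [IsHerm, Matrix.IsHermitian, ← Matrix.ext_iff, conjTranspose_apply, qdia_eq_star]

namespace IsHerm

variable {n : ℕ} {A B : Matrix (Fin n) (Fin n) HC}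

theorem one : IsHerm (1 : Matrix (Fin n) (Fin n) HC) :=
  isHerm_iff_isHermitian.2 isHermitian_one

theorem add (hA : IsHerm A) (hB : IsHerm B) : IsHerm (A + B) :=
  isHerm_iff_isHermitian.2 <|
    (isHerm_iff_isHermitian.1 hA).add (isHerm_iff_isHermitian.1 hB)

theorem sub (hA : IsHerm A) (hB : IsHerm B) : IsHerm (A - B) :=
  isHerm_iff_isHermitian.2 <|
    (isHerm_iff_isHermitian.1 hA).sub (isHerm_iff_isHermitian.1 hB)

theorem smul (hA : IsHerm A) (c : ℂ) : IsHerm (c • A) := fun i j => by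
  rw [Matrix.smul_apply, Matrix.smul_apply, qdia_smul, hA]

theorem diag (hA : IsHerm A) (i : Fin n) : A i i = cq (A i i).re :=
  Quaternion.star_eq_self.1 ((qdia_eq_star _).symm.trans (hA i i))

theorem re_diag_ne_zero (hA : IsHerm A) {i : Fin n} (hi : A i i ≠ 0) : (A i i).re ≠ 0 :=
  fun h => hi (by rw [hA.diag i, h]; rfl)

end IsHerm

theorem IsHerm.mem_closure_pivot_ne_zero {n : ℕ} {A : Matrix (Fin (n + 1)) (Fin (n + 1)) HC}
    (hA : IsHerm A) : A ∈ closure {B | IsHerm B ∧ B 0 0 ≠ 0} := by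
  have hcont : Continuous fun s : ℂ => A + s • (1 : Matrix (Fin (n + 1)) (Fin (n + 1)) HC) := by
    fun_prop
  have hmaps : Set.MapsTo (fun s : ℂ => A + s • (1 : Matrix (Fin (n + 1)) (Fin (n + 1)) HC))
      {-(A 0 0).re}ᶜ {B | IsHerm B ∧ B 0 0 ≠ 0} := fun s hs =>
    ⟨hA.add (IsHerm.one.smul s), fun h => hs <| by
      have hre := congrArg (fun x : HC => x.re) h
      rw [Set.mem_singleton_iff, eq_neg_iff_add_eq_zero, add_comm]
      simpa using hre⟩
  simpa only [zero_smul_matrix, add_zero] using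
    map_mem_closure hcont (dense_compl_singleton _ (0 : ℂ)) hmaps

theorem IsHerm.eqOn_of_pivot_ne_zero {n : ℕ} {Y : Type*} [TopologicalSpace Y] [T2Space Y]
    {f g : Matrix (Fin (n + 1)) (Fin (n + 1)) HC → Y} (hf : ContinuousOn f {A | IsHerm A})
    (hg : ContinuousOn g {A | IsHerm A}) (hfg : ∀ A, IsHerm A → A 0 0 ≠ 0 → f A = g A) :
    Set.EqOn f g {A | IsHerm A} :=
  Set.EqOn.of_subset_closure (fun A hA => hfg A hA.1 hA.2) hf hg (fun _ hA => hA.1)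
    fun _ hA => hA.mem_closure_pivot_ne_zero

/-- The Schur complement of the top-left entry `A 0 0`, which has to be scalar, as it is in a
`⋄`-hermitian matrix: only its real part enters. -/
def schurComplement {n : ℕ} (A : Matrix (Fin (n + 1)) (Fin (n + 1)) HC) :
    Matrix (Fin n) (Fin n) HC :=
  Matrix.of fun i j => A i.succ j.succ - (A 0 0).re⁻¹ • (A i.succ 0 * A 0 j.succ)

theorem IsHerm.schurComplement {n : ℕ} {A : Matrix (Fin (n + 1)) (Fin (n + 1)) HC}
    (hA : IsHerm A) : IsHerm (schurComplement A) := fun i j => by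
  simp only [_root_.schurComplement, of_apply, qdia_sub, qdia_smul, qdia_mul, hA _ _]

theorem schurComplement_one (n : ℕ) :
    schurComplement (1 : Matrix (Fin (n + 1)) (Fin (n + 1)) HC) = 1 := by
  ext1 i j
  simp [schurComplement, one_apply, Fin.succ_ne_zero]

/-- `x ↦ x̂` as a homomorphism of complex algebras. -/
def hatAlgHom : HC →ₐ[ℂ] Matrix (Fin 2) (Fin 2) ℂ := AlgHom.ofLinearMap
  { toFun := hat
    map_add' := fun x y => by
      ext k l; fin_cases k <;> fin_cases l <;> simp [hat] <;> ring
    map_smul' := fun c x => by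
      ext k l; fin_cases k <;> fin_cases l <;> simp [hat] <;> ring }
  (by ext k l; fin_cases k <;> fin_cases l <;> simp [hat])
  (fun x y => by
      ext k l; fin_cases k <;> fin_cases l <;> simp [hat, Matrix.mul_apply] <;>
        grind [Complex.I_sq])

/-- `A ↦ Â` as a homomorphism of complex algebras. -/
def hatMAlgHom (n : ℕ) :
    Matrix (Fin n) (Fin n) HC →ₐ[ℂ] Matrix (Fin n × Fin 2) (Fin n × Fin 2) ℂ :=
  (compAlgEquiv (Fin n) (Fin 2) ℂ ℂ).toAlgHom.comp hatAlgHom.mapMatrix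

theorem hatAlgHom_apply (x : HC) : hatAlgHom x = hat x := rfl

theorem hatMAlgHom_apply {n : ℕ} (A : Matrix (Fin n) (Fin n) HC) : hatMAlgHom n A = hatM A := rfl

theorem det_hat (x : HC) : (hat x).det = normSq x := by
  rw [hat, det_fin_two_of, Quaternion.normSq_def']
  grind [Complex.I_sq]

theorem det_hatM_fin_one (A : Matrix (Fin 1) (Fin 1) HC) : (hatM A).det = normSq (A 0 0) := by
  rw [← det_hat, ← det_submatrix_equiv_self (Equiv.uniqueProd (Fin 2) (Fin 1)).symm]
  rfl

/-- Splits off the two indices with first component `0`. -/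
def blockEquiv (n : ℕ) : Fin 2 ⊕ Fin n × Fin 2 ≃ Fin (n + 1) × Fin 2 :=
  optionProdEquiv.symm.trans ((finSuccEquiv n).symm.prodCongr (.refl _))

/-- `hatM A` with the two rows and columns of the entry `A 0 0` split off as its first block. -/
def hatBlocks {n : ℕ} (A : Matrix (Fin (n + 1)) (Fin (n + 1)) HC) :
    Matrix (Fin 2 ⊕ Fin n × Fin 2) (Fin 2 ⊕ Fin n × Fin 2) ℂ :=
  (hatM A).submatrix (blockEquiv n) (blockEquiv n)

theorem hatM_schurComplement {n : ℕ} (A : Matrix (Fin (n + 1)) (Fin (n + 1)) HC) :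
    hatM (schurComplement A) = (hatBlocks A).toBlocks₂₂ -
      (A 0 0).re⁻¹ • ((hatBlocks A).toBlocks₂₁ * (hatBlocks A).toBlocks₁₂) := by
  ext ⟨i, k⟩ ⟨j, l⟩
  have h : hat (schurComplement A i j) = hat (A i.succ j.succ) -
      (A 0 0).re⁻¹ • (hat (A i.succ 0) * hat (A 0 j.succ)) := by
    simp only [← hatAlgHom_apply, schurComplement, of_apply, map_sub, map_smul, map_mul]
  exact congrFun₂ h k l

theorem hat_cq (z : ℂ) : hat (cq z) = z • 1 := by
  rw [← hatAlgHom_apply, cq_eq_smul_one, map_smul, map_one]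

theorem det_hatM_succ {n : ℕ} {A : Matrix (Fin (n + 1)) (Fin (n + 1)) HC}
    (hA : A 0 0 = cq (A 0 0).re) (h0 : (A 0 0).re ≠ 0) :
    (hatM A).det = (A 0 0).re ^ 2 * (hatM (schurComplement A)).det := by
  have h11 : (hatBlocks A).toBlocks₁₁ = (A 0 0).re • 1 := by
    rw [← hat_cq, ← hA]
    rfl
  let inv : Invertible (hatBlocks A).toBlocks₁₁ :=
    ⟨(A 0 0).re⁻¹ • 1, by simp [h11, smul_smul, h0], by simp [h11, smul_smul, h0]⟩
  have hinv : ⅟(hatBlocks A).toBlocks₁₁ = (A 0 0).re⁻¹ • 1 := rfl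
  rw [← det_submatrix_equiv_self (blockEquiv n), ← hatBlocks, ← fromBlocks_toBlocks (hatBlocks A),
    det_fromBlocks₁₁, hinv, Matrix.mul_smul, Matrix.mul_one, Matrix.smul_mul,
    ← hatM_schurComplement, h11, det_smul, det_one, mul_one, Fintype.card_fin]

theorem continuous_hatM (n : ℕ) : Continuous (hatM (n := n)) :=
  (hatMAlgHom n).toLinearMap.continuous_of_finiteDimensional

namespace IsDtSeq

variable {D : ∀ n : ℕ, Matrix (Fin (n + 1)) (Fin (n + 1)) HC → HC} {n : ℕ}

theorem continuous_re_comp (hD : IsDtSeq D) {X : Type*} [TopologicalSpace X]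
    {γ : X → Matrix (Fin (n + 1)) (Fin (n + 1)) HC} (hγ : Continuous γ)
    (hherm : ∀ x, IsHerm (γ x)) : Continuous fun x => (D n (γ x)).re :=
  HC.continuous_re.comp ((hD.1 n).comp_continuous hγ hherm)

theorem succ_apply (hD : IsDtSeq D) {A : Matrix (Fin (n + 2)) (Fin (n + 2)) HC} (hA : IsHerm A)
    (h0 : A 0 0 ≠ 0) : D (n + 1) A = (A 0 0).re • D n (schurComplement A) := by
  have hschur : schurComplement A = .of fun i j : Fin (n + 1) =>
      A i.succ j.succ - Ring.inverse (A 0 0) * A i.succ 0 * A 0 j.succ := by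
    ext1 i j
    rw [of_apply, hA.diag 0, inverse_cq (hA.re_diag_ne_zero h0), cq_eq_coe, mul_assoc,
      Quaternion.coe_mul_eq_smul]
    rfl
  rw [hD.2.2 n A hA h0, ← hschur, ← Quaternion.coe_mul_eq_smul, ← cq_eq_coe, ← hA.diag 0]

theorem eq_cq_re (hD : IsDtSeq D) {A : Matrix (Fin (n + 1)) (Fin (n + 1)) HC} (hA : IsHerm A) :
    D n A = cq (D n A).re := by
  induction n with
  | zero =>
    rw [hD.2.1 A hA]
    exact hA.diag 0
  | succ n ih =>
    refine IsHerm.eqOn_of_pivot_ne_zero (hD.1 _)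
      ((continuous_cq.comp HC.continuous_re).comp_continuousOn (hD.1 _)) (fun B hB h0 => ?_) hA
    rw [Function.comp_apply, hD.succ_apply hB h0, ih hB.schurComplement, cq_eq_coe,
      Quaternion.smul_coe]
    rfl

theorem re_sq (hD : IsDtSeq D) {A : Matrix (Fin (n + 1)) (Fin (n + 1)) HC} (hA : IsHerm A) :
    (D n A).re ^ 2 = (hatM A).det := by
  induction n with
  | zero =>
    rw [hD.2.1 A hA, det_hatM_fin_one, hA.diag 0, cq_eq_coe, Quaternion.normSq_coe,
      Quaternion.re_coe]
  | succ n ih =>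
    refine IsHerm.eqOn_of_pivot_ne_zero (f := fun A => (D (n + 1) A).re ^ 2)
      ((HC.continuous_re.comp_continuousOn (hD.1 _)).pow 2)
      (continuous_hatM _).matrix_det.continuousOn (fun B hB h0 => ?_) hA
    rw [hD.succ_apply hB h0, det_hatM_succ (hB.diag 0) (hB.re_diag_ne_zero h0),
      ← ih hB.schurComplement, Quaternion.re_smul, smul_eq_mul, mul_pow]

theorem apply_one (hD : IsDtSeq D) (n : ℕ) : D n 1 = 1 := by
  induction n with
  | zero => rw [hD.2.1 1 .one, one_apply_eq]
  | succ n ih =>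
    rw [hD.succ_apply .one (by simp), schurComplement_one, ih, one_apply_eq, Quaternion.re_one,
      one_smul]

theorem re_smul (hD : IsDtSeq D) {A : Matrix (Fin (n + 1)) (Fin (n + 1)) HC} (hA : IsHerm A)
    (c : ℂ) : (D n (c • A)).re = c ^ (n + 1) * (D n A).re := by
  have hsq (c : ℂ) : (D n (c • A)).re ^ 2 = (c ^ (n + 1) * (D n A).re) ^ 2 := by
    rw [hD.re_sq (hA.smul c), mul_pow, hD.re_sq hA, ← hatMAlgHom_apply, map_smul, det_smul,
      hatMAlgHom_apply]
    simp [pow_mul]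
  by_cases h : c ^ (n + 1) * (D n A).re = 0
  · rw [h]
    simpa [h] using hsq c
  · have hc : c ≠ 0 := by rintro rfl; simp at h
    have hcont : Continuous fun c : ℂ => (D n (c • A)).re :=
      hD.continuous_re_comp (by fun_prop) hA.smul
    refine (isConnected_compl_singleton_of_one_lt_rank (by simp) (0 : ℂ)).isPreconnected.eq_of_sq_eq
      hcont.continuousOn (by fun_prop) (fun c _ => hsq c) (fun {c} hc => ?_) (y := 1) (by simp)
      (by simp) hc
    exact mul_ne_zero (pow_ne_zero _ hc) (right_ne_zero_of_mul h)

end IsDtSeq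

theorem eval_charpoly_hatM {n : ℕ} (A : Matrix (Fin n) (Fin n) HC) (z : ℂ) :
    (hatM A).charpoly.eval z = (hatM (z • 1 - A)).det := by
  have hmap : hatM (z • 1 - A) = scalar _ z - hatM A := by
    rw [← hatMAlgHom_apply, map_sub, map_smul, map_one, hatMAlgHom_apply, smul_one_eq_diagonal]
    rfl
  rw [eval_charpoly, hmap]

/-- `q` is the characteristic polynomial `q(λ) = dt(λ·𝟏 - x)` of `A = x` with respect to the
determinants `D`. -/
def IsDtCharpoly (D : ∀ n : ℕ, Matrix (Fin (n + 1)) (Fin (n + 1)) HC → HC) {n : ℕ}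
    (A : Matrix (Fin (n + 1)) (Fin (n + 1)) HC) (q : ℂ[X]) : Prop :=
  ∀ z : ℂ, cq (q.eval z) = D n (z • 1 - A)

theorem IsDtSeq.exists_isDtCharpoly {D : ∀ n : ℕ, Matrix (Fin (n + 1)) (Fin (n + 1)) HC → HC}
    (hD : IsDtSeq D) {n : ℕ} {A : Matrix (Fin (n + 1)) (Fin (n + 1)) HC} (hA : IsHerm A) :
    ∃ q, IsDtCharpoly D A q := by
  have hherm (z : ℂ) : IsHerm (z • 1 - A) := (IsHerm.one.smul z).sub hA
  obtain ⟨q, hq⟩ : ∃ q : ℂ[X], ∀ z, q.eval z = (D n (z • 1 - A)).re := by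
    refine exists_polynomial_eval_eq_of_pow_eq_eval
      (hD.continuous_re_comp (by fun_prop) hherm) (hatM A).charpoly_monic.ne_zero two_ne_zero
      fun z => ?_
    rw [hD.re_sq (hherm z), eval_charpoly_hatM]
  exact ⟨q, fun z => by rw [hq, ← hD.eq_cq_re (hherm z)]⟩

namespace IsDtCharpoly

variable {D : ∀ n : ℕ, Matrix (Fin (n + 1)) (Fin (n + 1)) HC → HC} {n : ℕ}
  {A : Matrix (Fin (n + 1)) (Fin (n + 1)) HC} {q : ℂ[X]}

theorem eval_eq (hq : IsDtCharpoly D A q) (z : ℂ) : q.eval z = (D n (z • 1 - A)).re :=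
  congrArg (fun x : HC => x.re) (hq z)

theorem charpoly_hatM_eq_sq (hq : IsDtCharpoly D A q) (hD : IsDtSeq D) (hA : IsHerm A) :
    (hatM A).charpoly = q ^ 2 :=
  Polynomial.funext fun z => by
    rw [eval_pow, hq.eval_eq, hD.re_sq ((IsHerm.one.smul z).sub hA), eval_charpoly_hatM]

theorem natDegree_eq (hq : IsDtCharpoly D A q) (hD : IsDtSeq D) (hA : IsHerm A) :
    q.natDegree = n + 1 := by
  have hdeg := (hatM A).charpoly_natDegree_eq_dim
  rw [hq.charpoly_hatM_eq_sq hD hA, natDegree_pow, Fintype.card_prod, Fintype.card_fin,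
    Fintype.card_fin, mul_comm] at hdeg
  exact Nat.eq_of_mul_eq_mul_right two_pos hdeg

theorem eval_reverse (hq : IsDtCharpoly D A q) (hD : IsDtSeq D) (hA : IsHerm A) (t : ℂ) :
    q.reverse.eval t = (D n (1 - t • A)).re := by
  have hcont : Continuous fun t : ℂ => (D n (1 - t • A)).re :=
    hD.continuous_re_comp (by fun_prop) fun t => IsHerm.one.sub (hA.smul t)
  refine congrFun (q.reverse.continuous.ext_on (dense_compl_singleton 0) hcont
    fun t (ht : t ≠ 0) => ?_) t
  have hscale : 1 - t • A = t • (t⁻¹ • 1 - A) := by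
    rw [smul_sub, smul_inv_smul₀ ht]
  let inv : Invertible t⁻¹ := invertibleOfNonzero (inv_ne_zero ht)
  have hreverse : q.reverse.eval t * t⁻¹ ^ q.natDegree = q.eval t⁻¹ := by
    simpa only [eval₂_id, invOf_eq_inv, inv_inv] using
      eval₂_reverse_mul_pow (RingHom.id ℂ) t⁻¹ q
  rw [hscale, hD.re_smul ((IsHerm.one.smul t⁻¹).sub hA), ← hq.eval_eq, ← hreverse,
    hq.natDegree_eq hD hA, mul_left_comm, ← mul_pow, mul_inv_cancel₀ ht, one_pow, mul_one]

theorem monic (hq : IsDtCharpoly D A q) (hD : IsDtSeq D) (hA : IsHerm A) : q.Monic := by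
  rw [Monic, ← coeff_zero_reverse, coeff_zero_eq_eval_zero, hq.eval_reverse hD hA,
    zero_smul_matrix, sub_zero, hD.apply_one, Quaternion.re_one]

theorem prod_roots (hq : IsDtCharpoly D A q) (hD : IsDtSeq D) (hA : IsHerm A) :
    q.roots.prod = (D n A).re := by
  have hneg : (0 : ℂ) • 1 - A = (-1 : ℂ) • A := by
    rw [zero_smul_matrix, zero_sub]
    exact (neg_one_smul ℂ A).symm
  have hvieta := (IsAlgClosed.splits q).coeff_zero_eq_prod_roots_of_monic (hq.monic hD hA)
  rw [coeff_zero_eq_eval_zero, hq.eval_eq, hneg, hD.re_smul hA, hq.natDegree_eq hD hA] at hvieta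
  exact (mul_left_cancel₀ (pow_ne_zero _ (neg_ne_zero.2 one_ne_zero)) hvieta).symm

end IsDtCharpoly

/-- For every `n ≥ 1` and `x ∈ H_n(ℍ_ℂ)` (here `D n = dt_{n+1}`),
the characteristic polynomial of `x̂` equals `q²`, where `q` is the monic degree-`n`
complex polynomial `q(λ) = dt_n(λ·𝟏 − x)`; consequently every eigenvalue of `x̂` has even
algebraic multiplicity, and `dt_n(x)` is the product of the eigenvalues of `x̂`, each
counted with half its algebraic multiplicity (i.e. the product of the roots of `q`). -/
theorem statement3 (D : ∀ n : ℕ, Matrix (Fin (n + 1)) (Fin (n + 1)) HC → HC)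
    (hD : IsDtSeq D) (n : ℕ) (A : Matrix (Fin (n + 1)) (Fin (n + 1)) HC)
    (hA : IsHerm A) :
    ∃ q : Polynomial ℂ, q.Monic ∧ q.natDegree = n + 1 ∧
      (∀ z : ℂ, cq (Polynomial.eval z q) =
        D n (z • (1 : Matrix (Fin (n + 1)) (Fin (n + 1)) HC) - A)) ∧
      Matrix.charpoly (hatM A) = q ^ 2 ∧
      (∀ μ : ℂ, Even ((Matrix.charpoly (hatM A)).rootMultiplicity μ)) ∧
      D n A = cq q.roots.prod := by
  obtain ⟨q, hq⟩ := hD.exists_isDtCharpoly hA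
  refine ⟨q, hq.monic hD hA, hq.natDegree_eq hD hA, hq, hq.charpoly_hatM_eq_sq hD hA,
    fun μ => ?_, ?_⟩
  · rw [hq.charpoly_hatM_eq_sq hD hA, ← count_roots, roots_pow, Multiset.count_nsmul]
    exact even_two_mul _
  · rw [hq.prod_roots hD hA, ← hD.eq_cq_re hA]
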